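/- Let n ≥ 1 be an integer, let p_0 ∈ (1,∞) and let ε > 0. There exists δ = δ(n, p_0, ε) > 0, independent of J and p, such that for every J ⊆ {1,2,…,n}, every p ∈ (1, p_0], and every choice of real numbers φ_j ∈ (2^{−j}(1−δ), 2^{−j}(1+δ)) for j ∈ J, one has ∫_0^{2^{n−1}π} ∏_{j∈J} |cos(φ_j ξ)|^p dξ ≤ (1+ε) 2^{n−|J|−1} π C_p^{b(J)}, where C_p = 2 π^p ∑_{s=1}^∞ s^{−p}. -/

import Mathlib

open scoped Real

/-- The constant `C_p = 2 π^p ∑_{s=1}^∞ s^{-p}`. -/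
noncomputable def Cp (p : ℝ) : ℝ := 2 * π ^ p * ∑' s : ℕ, (1 : ℝ) / ((s : ℝ) + 1) ^ p

/-- The number of components `b(J) = #{j ∈ J : j - 1 ∉ J}` of a finite set of integers. -/
def numComponents (J : Finset ℕ) : ℕ := (J.filter fun j => j - 1 ∉ J).card

open MeasureTheory

lemma aux_prod_le (J : Finset ℕ) (a b : ℕ → ℝ) (d : ℝ) (hd : 0 ≤ d)
    (ha0 : ∀ j, 0 ≤ a j) (ha : ∀ j, a j ≤ 1) (hb0 : ∀ j, 0 ≤ b j) (hb : ∀ j, b j ≤ 1)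
    (h : ∀ j ∈ J, a j ≤ b j + d) : ∏ j ∈ J, a j ≤ ∏ j ∈ J, b j + J.card * d := by
  induction J using Finset.induction_on with
  | empty => simp
  | insert i s hi ih =>
    rw [Finset.prod_insert hi, Finset.prod_insert hi, Finset.card_insert_of_notMem hi]
    have h1 := ih (fun j hj => h j (Finset.mem_insert_of_mem hj))
    have h2 := h i (Finset.mem_insert_self _ _)
    have h3 : 0 ≤ ∏ j ∈ s, a j := Finset.prod_nonneg fun j _ => ha0 j
    have h4 : ∏ j ∈ s, a j ≤ 1 := Finset.prod_le_one (fun j _ => ha0 j) fun j _ => ha j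
    have h5 : 0 ≤ (s.card : ℝ) * d := by positivity
    push_cast
    calc a i * ∏ j ∈ s, a j ≤ (b i + d) * ∏ j ∈ s, a j := by gcongr
      _ = b i * ∏ j ∈ s, a j + d * ∏ j ∈ s, a j := by ring
      _ ≤ b i * (∏ j ∈ s, b j + s.card * d) + d * 1 := by
        have := hb0 i
        gcongr
      _ ≤ _ := by nlinarith [hb i, hb0 i]

lemma aux_rpow (x y p : ℝ) (hx0 : 0 ≤ x) (hx : x ≤ 1) (hy0 : 0 ≤ y) (hp : 1 < p) :
    x ^ p ≤ y ^ p + p * |x - y| := by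
  rcases le_total x y with hxy | hxy
  · have := Real.rpow_le_rpow hx0 hxy (by linarith : 0 ≤ p)
    have : 0 ≤ p * |x - y| := by positivity
    linarith
  · rcases hx0.eq_or_lt with h0 | h0
    · subst h0
      have : y = 0 := le_antisymm hxy hy0
      subst this; simp
    · have h1 := one_add_mul_self_le_rpow_one_add (s := y / x - 1)
        (by have : 0 ≤ y / x := by positivity
            linarith) hp.le
      have h2 : y ^ p = x ^ p * (1 + (y / x - 1)) ^ p := by
        rw [← Real.mul_rpow hx0 (by have : 0 ≤ y / x := by positivity
                                    linarith)]
        congr 1; field_simp; ring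
      have h3 : x ^ p = x * x ^ (p - 1) := by
        conv_rhs => rw [mul_comm, ← Real.rpow_add_one h0.ne']
        congr 1; ring
      have h4 : x ^ (p - 1) ≤ 1 := Real.rpow_le_one hx0 hx (by linarith)
      have h5 : x ^ p * (1 + p * (y / x - 1)) ≤ y ^ p := by
        rw [h2]; gcongr
      have h6 : x ^ p * (1 + p * (y / x - 1)) = x ^ p - p * (x - y) * x ^ (p - 1) := by
        rw [h3]; field_simp; ring
      rw [abs_of_nonneg (by linarith)]
      have h7 : p * (x - y) * x ^ (p - 1) ≤ p * (x - y) * 1 := by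
        have : 0 ≤ p * (x - y) := mul_nonneg (by linarith) (by linarith)
        gcongr
      linarith

lemma aux_cos (a b ξ : ℝ) : |(|Real.cos (a * ξ)| - |Real.cos (b * ξ)|)| ≤ |a - b| * |ξ| := by
  refine (abs_abs_sub_abs_le_abs_sub _ _).trans ?_
  have := Real.abs_cos_sub_cos_le (a * ξ) (b * ξ)
  rwa [← sub_mul, abs_mul] at this

lemma summ (p : ℝ) (hp : 1 < p) : Summable fun s : ℕ => (1 : ℝ) / ((s : ℝ) + 1) ^ p := by
  have := (Real.summable_one_div_nat_rpow (p := p)).2 hp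
  have := (summable_nat_add_iff 1).2 this
  simpa using this

lemma sum_le_Cp (p : ℝ) (hp : 1 < p) (N : ℕ) :
    ∑ s ∈ Finset.range N, ((1 : ℝ) / ((s : ℝ) + 1) ^ p + 1 / (((N - 1 - s : ℕ) : ℝ) + 1) ^ p)
      ≤ Cp p := by
  rw [Finset.sum_add_distrib, Finset.sum_range_reflect (fun s : ℕ => (1 : ℝ) / ((s : ℝ) + 1) ^ p) N]
  have h := (summ p hp).sum_le_tsum (Finset.range N) (fun i _ => by positivity)
  have h0 : 0 ≤ ∑' s : ℕ, (1 : ℝ) / ((s : ℝ) + 1) ^ p := tsum_nonneg fun i => by positivity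
  have h1 : 1 ≤ π ^ p := Real.one_le_rpow (by linarith [Real.pi_gt_three]) (by linarith)
  unfold Cp
  nlinarith

lemma one_le_Cp (p : ℝ) (hp : 1 < p) : 1 ≤ Cp p := by
  have := sum_le_Cp p hp 1
  simp at this
  linarith

/-- the block identity -/
lemma block_id (m a : ℕ) (ξ : ℝ) :
    (∏ j ∈ Finset.Ioc a (a + m), Real.cos (ξ / 2 ^ j)) * (2 ^ m * Real.sin (ξ / 2 ^ (a + m)))
      = Real.sin (ξ / 2 ^ a) := by
  induction m with
  | zero => simp
  | succ m ih =>
    rw [← add_assoc, Finset.prod_Ioc_succ_top (by omega), ← ih]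
    have : ξ / 2 ^ (a + m) = 2 * (ξ / 2 ^ (a + m + 1)) := by
      rw [pow_succ]; field_simp
    rw [this, Real.sin_two_mul]; ring

lemma block_le (m a s : ℕ) (hs : s < 2 ^ m) (p : ℝ) (hp : 1 < p) (ξ : ℝ)
    (h1 : s * (2 ^ a * π) ≤ ξ) (h2 : ξ ≤ (s + 1 : ℕ) * (2 ^ a * π)) :
    ∏ j ∈ Finset.Ioc a (a + m), |Real.cos (ξ / 2 ^ j)| ^ p ≤
      (1 : ℝ) / ((s : ℝ) + 1) ^ p + 1 / (((2 ^ m - 1 - s : ℕ) : ℝ) + 1) ^ p := by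
  rw [Real.finsetProd_rpow _ _ (fun _ _ => abs_nonneg _), ← Finset.abs_prod]
  have hid := block_id m a ξ
  set B := ∏ j ∈ Finset.Ioc a (a + m), Real.cos (ξ / 2 ^ j) with hB
  have hB1 : |B| ≤ 1 := by
    rw [hB, Finset.abs_prod]
    exact Finset.prod_le_one (fun _ _ => abs_nonneg _) fun _ _ => Real.abs_cos_le_one _
  have hB2 : |B| * (2 ^ m * |Real.sin (ξ / 2 ^ (a + m))|) ≤ 1 := by
    have := Real.abs_sin_le_one (ξ / 2 ^ a)
    rw [← hid, abs_mul, abs_mul, abs_of_pos (by positivity : (0 : ℝ) < 2 ^ m)] at this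
    exact this
  -- key
  have key : ∀ t : ℕ, 2 * (t : ℝ) ≤ 2 ^ m * |Real.sin (ξ / 2 ^ (a + m))| → |B| ^ p ≤ 1 / ((t : ℝ) + 1) ^ p := by
    intro t ht
    have h3 : |B| ≤ 1 / ((t : ℝ) + 1) := by
      rw [le_div_iff₀ (by positivity)]
      rcases Nat.eq_zero_or_pos t with h | h
      · subst h; simpa using hB1
      · have : (1 : ℝ) ≤ t := by exact_mod_cast h
        refine le_trans ?_ hB2
        gcongr
        linarith
    calc |B| ^ p ≤ (1 / ((t : ℝ) + 1)) ^ p := by gcongr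
      _ = _ := by rw [Real.div_rpow (by positivity) (by positivity), Real.one_rpow]
  set x := ξ / 2 ^ (a + m) with hx
  have hξ : ξ = x * 2 ^ (a + m) := by rw [hx]; field_simp
  clear_value x
  have hx1 : s * π ≤ x * 2 ^ m := by
    rw [hξ, pow_add] at h1
    have : (0 : ℝ) < 2 ^ a := by positivity
    nlinarith
  have hx2 : x * 2 ^ m ≤ (s + 1) * π := by
    rw [hξ, pow_add] at h2
    push_cast at h2
    have : (0 : ℝ) < 2 ^ a := by positivity
    nlinarith
  have hpos : (0 : ℝ) < 2 ^ m := by positivity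
  have hpi := Real.pi_pos
  have hsm : ((2 ^ m - 1 - s : ℕ) : ℝ) = 2 ^ m - 1 - s := by
    rw [Nat.cast_sub (by omega), Nat.cast_sub (by omega)]; push_cast; ring
  have hs' : (s : ℝ) + 1 ≤ 2 ^ m := by exact_mod_cast hs
  rcases le_total x (π / 2) with hc | hc
  · have hx0 : 0 ≤ x := by
      by_contra hneg
      push Not at hneg
      have : (0 : ℝ) ≤ s * π := by positivity
      nlinarith
    have h6 := Real.mul_le_sin hx0 hc
    have h7 : |B| ^ p ≤ 1 / ((s : ℝ) + 1) ^ p := by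
      apply key s
      · refine le_trans ?_ (mul_le_mul_of_nonneg_left (h6.trans (le_abs_self _)) hpos.le)
        rw [← mul_assoc, ← mul_div_assoc, div_mul_eq_mul_div, le_div_iff₀ hpi]; nlinarith
    have : 0 ≤ 1 / (((2 ^ m - 1 - s : ℕ) : ℝ) + 1) ^ p := by positivity
    linarith
  · have hx0 : 0 ≤ π - x := by
      by_contra hneg
      push Not at hneg
      nlinarith
    have h6 := Real.mul_le_sin hx0 (by linarith)
    rw [Real.sin_pi_sub] at h6
    have h7 : |B| ^ p ≤ 1 / (((2 ^ m - 1 - s : ℕ) : ℝ) + 1) ^ p := by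
      apply key
      · refine le_trans ?_ (mul_le_mul_of_nonneg_left (h6.trans (le_abs_self _)) hpos.le)
        rw [hsm, ← mul_assoc, ← mul_div_assoc, div_mul_eq_mul_div, le_div_iff₀ hpi]; nlinarith
    have : 0 ≤ (1 : ℝ) / ((s : ℝ) + 1) ^ p := by positivity
    linarith

noncomputable def ff (J : Finset ℕ) (p : ℝ) (ξ : ℝ) : ℝ := ∏ j ∈ J, |Real.cos (ξ / 2 ^ j)| ^ p

lemma ff_nonneg (J : Finset ℕ) (p ξ : ℝ) : 0 ≤ ff J p ξ :=
  Finset.prod_nonneg fun _ _ => by positivity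

lemma ff_cont (J : Finset ℕ) (p : ℝ) (hp : 1 < p) : Continuous (ff J p) := by
  unfold ff
  refine continuous_finsetProd _ fun j _ => ?_
  exact Continuous.rpow_const (by fun_prop) fun _ => Or.inr (by linarith)

lemma ff_periodic (J : Finset ℕ) (p : ℝ) (n : ℕ) (hJ : ∀ j ∈ J, j ≤ n) :
    Function.Periodic (ff J p) (2 ^ n * π) := by
  intro ξ
  refine Finset.prod_congr rfl fun j hj => ?_
  congr 1
  obtain ⟨k, rfl⟩ := Nat.exists_eq_add_of_le (hJ j hj)
  have : (ξ + 2 ^ (j + k) * π) / 2 ^ j = ξ / 2 ^ j + (2 ^ k : ℕ) * π := by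
    push_cast; rw [pow_add]; field_simp
  rw [this, Real.cos_add_nat_mul_pi, abs_mul, abs_pow]
  simp

lemma ff_even (J : Finset ℕ) (p ξ : ℝ) : ff J p (-ξ) = ff J p ξ := by
  unfold ff; simp [neg_div]

lemma ff_half (J : Finset ℕ) (p : ℝ) (hp : 1 < p) (n : ℕ) (hJ : ∀ j ∈ J, j ≤ n + 1) :
    ∫ ξ in (0 : ℝ)..(2 ^ (n + 1) * π), ff J p ξ = 2 * ∫ ξ in (0 : ℝ)..(2 ^ n * π), ff J p ξ := by
  have hi : ∀ a b, IntervalIntegrable (ff J p) volume a b :=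
    fun a b => (ff_cont J p hp).intervalIntegrable a b
  have hper := ff_periodic J p _ hJ
  rw [← intervalIntegral.integral_add_adjacent_intervals (hi 0 (2 ^ n * π)) (hi _ _)]
  have : ∫ ξ in (2 ^ n * π)..(2 ^ (n + 1) * π), ff J p ξ = ∫ ξ in (0 : ℝ)..(2 ^ n * π), ff J p ξ := by
    have h := intervalIntegral.integral_comp_sub_left (a := 0) (b := 2 ^ n * π) (ff J p) (2 ^ (n + 1) * π)
    have e : (2 : ℝ) ^ (n + 1) * π - 2 ^ n * π = 2 ^ n * π := by ring
    rw [e, sub_zero] at h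
    rw [← h]
    congr 1; ext x
    rw [← hper.sub_eq, ← ff_even]
    congr 1; ring
  rw [this]; ring

lemma step (J : Finset ℕ) (a m : ℕ) (p : ℝ) (hp : 1 < p) (hJ : ∀ j ∈ J, j ≤ a) :
    ∫ ξ in (0 : ℝ)..(2 ^ (a + m) * π), ff (J ∪ Finset.Ioc a (a + m)) p ξ ≤
      Cp p * ∫ ξ in (0 : ℝ)..(2 ^ a * π), ff J p ξ := by
  have hi : ∀ K a b, IntervalIntegrable (ff K p) volume a b :=
    fun K a b => (ff_cont K p hp).intervalIntegrable a b
  have hper := ff_periodic J p _ hJ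
  set T : ℝ := 2 ^ a * π with hT
  have hTpos : 0 < T := by positivity
  set K := J ∪ Finset.Ioc a (a + m) with hK
  have h1 := intervalIntegral.sum_integral_adjacent_intervals (μ := volume) (f := ff K p)
    (a := fun s : ℕ => (s : ℝ) * T) (n := 2 ^ m) (fun k _ => hi _ _ _)
  have e : ((2 ^ m : ℕ) : ℝ) * T = 2 ^ (a + m) * π := by rw [hT]; push_cast; ring
  simp only [e, Nat.cast_zero, zero_mul] at h1
  rw [← h1]
  have hI0 : 0 ≤ ∫ ξ in (0 : ℝ)..T, ff J p ξ :=
    intervalIntegral.integral_nonneg hTpos.le fun _ _ => ff_nonneg _ _ _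
  refine le_trans ?_ (mul_le_mul_of_nonneg_right (sum_le_Cp p hp (2 ^ m)) hI0)
  rw [Finset.sum_mul]
  refine Finset.sum_le_sum fun s hs => ?_
  rw [Finset.mem_range] at hs
  have h2 : ∫ ξ in (0 : ℝ)..T, ff J p ξ = ∫ ξ in (s * T)..((s + 1 : ℕ) * T), ff J p ξ := by
    have := hper.intervalIntegral_add_eq 0 (s * T)
    rw [zero_add] at this
    rw [this]; congr 1; push_cast; ring
  rw [h2, ← intervalIntegral.integral_const_mul]
  refine intervalIntegral.integral_mono_on (by push_cast; nlinarith) (hi _ _ _)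
    ((hi _ _ _).const_mul _) fun ξ hξ => ?_
  have h3 : ff K p ξ = (∏ j ∈ Finset.Ioc a (a + m), |Real.cos (ξ / 2 ^ j)| ^ p) * ff J p ξ := by
    unfold ff
    rw [hK, Finset.prod_union, mul_comm]
    rw [Finset.disjoint_left]
    intro j hj hj'
    have := hJ j hj
    rw [Finset.mem_Ioc] at hj'
    omega
  rw [h3]
  exact mul_le_mul_of_nonneg_right (block_le m a s hs p hp ξ hξ.1 hξ.2) (ff_nonneg _ _ _)

lemma main_bound (p : ℝ) (hp : 1 < p) (n : ℕ) : ∀ J : Finset ℕ, J ⊆ Finset.Icc 1 n →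
    2 ^ J.card * ∫ ξ in (0 : ℝ)..(2 ^ n * π), ff J p ξ ≤ 2 ^ n * π * Cp p ^ numComponents J := by
  induction n using Nat.strong_induction_on with
  | _ n ih =>
  intro J hJ
  have hJ' : ∀ j ∈ J, 1 ≤ j ∧ j ≤ n := fun j hj => Finset.mem_Icc.1 (hJ hj)
  by_cases hn : n ∈ J
  · -- find the block
    obtain ⟨a, han, haJ, hblock⟩ : ∃ a, a < n ∧ a ∉ J ∧ ∀ k, a < k → k ≤ n → k ∈ J := by
      have hex : ∃ m, n - m ∉ J := ⟨n, fun h => by have := hJ' _ h; omega⟩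
      classical
      let m := Nat.find hex
      have hm : n - m ∉ J := Nat.find_spec hex
      have hmin : ∀ k < m, n - k ∈ J := fun k hk => not_not.1 (Nat.find_min hex hk)
      have hm0 : m ≠ 0 := fun h => hm (by rw [h]; simpa using hn)
      have hn1 := (hJ' n hn).1
      refine ⟨n - m, by omega, hm, fun k hk hkn => ?_⟩
      have := hmin (n - k) (by omega)
      rwa [show n - (n - k) = k by omega] at this
    obtain ⟨m, rfl⟩ := Nat.exists_eq_add_of_lt han
    set J₁ := J.filter (· ≤ a) with hJ₁
    have hJe : J = J₁ ∪ Finset.Ioc a (a + (m + 1)) := by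
      ext j
      simp only [hJ₁, Finset.mem_union, Finset.mem_filter, Finset.mem_Ioc]
      constructor
      · intro hj
        have := hJ' j hj
        by_cases h : j ≤ a
        · exact Or.inl ⟨hj, h⟩
        · right; omega
      · rintro (h | h)
        · exact h.1
        · exact hblock j h.1 (by omega)
    have hdisj : Disjoint J₁ (Finset.Ioc a (a + (m + 1))) := by
      rw [Finset.disjoint_left]
      intro j hj hj'
      have := (Finset.mem_filter.1 hj).2
      rw [Finset.mem_Ioc] at hj'
      omega
    have hcard : J.card = J₁.card + (m + 1) := by
      conv_lhs => rw [hJe]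
      rw [Finset.card_union_of_disjoint hdisj]; simp
    have hcomp : numComponents J = numComponents J₁ + 1 := by
      unfold numComponents
      have : (J.filter fun j => j - 1 ∉ J) = insert (a + 1) (J₁.filter fun j => j - 1 ∉ J₁) := by
        ext j
        simp only [hJ₁, Finset.mem_insert, Finset.mem_filter]
        constructor
        · rintro ⟨h1, h2⟩
          by_cases h : j ≤ a
          · exact Or.inr ⟨⟨h1, h⟩, fun h3 => h2 h3.1⟩
          · left
            by_contra h3
            have := hJ' j h1
            exact h2 (hblock (j - 1) (by omega) (by omega))
        · rintro (h | ⟨⟨h1, h2⟩, h3⟩)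
          · subst h
            exact ⟨hblock _ (by omega) (by omega), by simpa using haJ⟩
          · exact ⟨h1, fun h4 => h3 ⟨h4, by omega⟩⟩
      rw [this, Finset.card_insert_of_notMem]
      intro h
      have := (Finset.mem_filter.1 (Finset.mem_filter.1 h).1).2
      omega
    have hs := step J₁ a (m + 1) p hp (fun j hj => (Finset.mem_filter.1 hj).2)
    rw [← hJe] at hs
    have hi := ih a (by omega) J₁ (fun j hj => by
      rw [Finset.mem_filter] at hj
      exact Finset.mem_Icc.2 ⟨(hJ' j hj.1).1, hj.2⟩)
    have hC := one_le_Cp p hp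
    rw [hcard, hcomp]
    calc (2 : ℝ) ^ (J₁.card + (m + 1)) * ∫ ξ in (0 : ℝ)..(2 ^ (a + m + 1) * π), ff J p ξ
        ≤ 2 ^ (J₁.card + (m + 1)) * (Cp p * ∫ ξ in (0 : ℝ)..(2 ^ a * π), ff J₁ p ξ) := by
          gcongr; exact hs
      _ = 2 ^ (m + 1) * Cp p * (2 ^ J₁.card * ∫ ξ in (0 : ℝ)..(2 ^ a * π), ff J₁ p ξ) := by ring
      _ ≤ 2 ^ (m + 1) * Cp p * (2 ^ a * π * Cp p ^ numComponents J₁) := by gcongr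
      _ = _ := by ring
  · rcases Nat.eq_zero_or_pos n with h0 | h0
    · subst h0
      have : J = ∅ := by simpa using hJ
      subst this
      simp [ff, numComponents]
    · obtain ⟨k, rfl⟩ := Nat.exists_eq_add_of_le' h0
      have hs : J ⊆ Finset.Icc 1 k := fun j hj => by
        have := hJ' j hj
        have : j ≠ k + 1 := fun h => hn (h ▸ hj)
        exact Finset.mem_Icc.2 (by omega)
      have := ih k (by omega) J hs
      rw [ff_half J p hp k (fun j hj => (hJ' j hj).2)]
      rw [pow_succ (2 : ℝ) k]
      linarith

/-- Perturbed incomplete cosine expansions of `sin(x)/x`: for every `n ≥ 1`, `p₀ ∈ (1,∞)`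
and `ε > 0` there is a `δ = δ(n,p₀,ε) > 0`, independent of `J` and `p`, such that for every
`J ⊆ {1,…,n}`, every `p ∈ (1,p₀]` and all `φ_j ∈ (2^{-j}(1-δ), 2^{-j}(1+δ))` (`j ∈ J`),
`∫_0^{2^{n-1}π} ∏_{j∈J} |cos(φ_j ξ)|^p dξ ≤ (1+ε) 2^{n-|J|-1} π C_p^{b(J)}`. -/
theorem integral_prod_cos_perturbed_le (n : ℕ) (hn : 1 ≤ n) (p₀ : ℝ) (hp₀ : 1 < p₀)
    (ε : ℝ) (hε : 0 < ε) :
    ∃ δ : ℝ, 0 < δ ∧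
      ∀ J : Finset ℕ, J ⊆ Finset.Icc 1 n → ∀ p : ℝ, 1 < p → p ≤ p₀ → ∀ φ : ℕ → ℝ,
        (∀ j ∈ J, φ j ∈
          Set.Ioo ((2 : ℝ) ^ (-(j : ℤ)) * (1 - δ)) ((2 : ℝ) ^ (-(j : ℤ)) * (1 + δ))) →
        ∫ ξ in Set.Ioc (0 : ℝ) (2 ^ (n - 1) * π), ∏ j ∈ J, |Real.cos (φ j * ξ)| ^ p ≤
          (1 + ε) * ((2 : ℝ) ^ ((n : ℤ) - (J.card : ℤ) - 1) * π * Cp p ^ numComponents J) := by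
  obtain ⟨N, rfl⟩ := Nat.exists_eq_add_of_le' hn
  simp only [Nat.add_sub_cancel]
  set L : ℝ := 2 ^ N * π with hL
  have hLpos : 0 < L := by positivity
  have hp0 : 0 < p₀ := by linarith
  refine ⟨ε / (((N + 1 : ℕ) : ℝ) * p₀ * L * L), by positivity, ?_⟩
  set δ : ℝ := ε / (((N + 1 : ℕ) : ℝ) * p₀ * L * L) with hδ
  have hδpos : 0 < δ := by positivity
  have hδe : ((N + 1 : ℕ) : ℝ) * (p₀ * (δ * L)) * L = ε := by
    rw [hδ]; field_simp
  intro J hJ p hp hpp φ hφ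
  have hJ' : ∀ j ∈ J, 1 ≤ j ∧ j ≤ N + 1 := fun j hj => Finset.mem_Icc.1 (hJ hj)
  have hcard : J.card ≤ N + 1 := by simpa using Finset.card_le_card hJ
  have hC := one_le_Cp p hp
  have hM := main_bound p hp (N + 1) J hJ
  rw [ff_half J p hp N (fun j hj => (hJ' j hj).2)] at hM
  set I := ∫ ξ in (0 : ℝ)..(2 ^ N * π), ff J p ξ with hI
  set R : ℝ := (2 : ℝ) ^ (((N + 1 : ℕ) : ℤ) - (J.card : ℤ) - 1) * π * Cp p ^ numComponents J with hR
  have hpowc : (0 : ℝ) < 2 ^ J.card := by positivity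
  have hz : (2 : ℝ) ^ (((N + 1 : ℕ) : ℤ) - (J.card : ℤ) - 1) = 2 ^ N / 2 ^ J.card := by
    rw [eq_div_iff hpowc.ne', ← zpow_natCast (2 : ℝ) J.card, ← zpow_natCast (2 : ℝ) N,
      ← zpow_add₀ (by norm_num)]
    congr 1; push_cast; ring
  have hIR : I ≤ R := by
    rw [hR, hz, div_mul_eq_mul_div, div_mul_eq_mul_div, le_div_iff₀ hpowc]
    rw [pow_succ (2 : ℝ) N] at hM
    linarith
  have hR1 : 1 ≤ R := by
    have h1 : (1 : ℝ) ≤ Cp p ^ numComponents J := one_le_pow₀ hC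
    have h2 : (1 : ℝ) / 2 ≤ 2 ^ N / 2 ^ J.card := by
      rw [div_le_div_iff₀ (by norm_num) hpowc, one_mul, ← pow_succ]
      exact pow_le_pow_right₀ (by norm_num) hcard
    have h3 : (1 : ℝ) ≤ 2 ^ N / 2 ^ J.card * π := by nlinarith [Real.pi_gt_three]
    rw [hR, hz]
    nlinarith
  rw [← intervalIntegral.integral_of_le hLpos.le]
  have hcont : Continuous fun ξ : ℝ => ∏ j ∈ J, |Real.cos (φ j * ξ)| ^ p :=
    continuous_finsetProd _ fun j _ =>
      Continuous.rpow_const (by fun_prop) fun _ => Or.inr (by linarith)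
  have hmono : ∫ ξ in (0 : ℝ)..L, ∏ j ∈ J, |Real.cos (φ j * ξ)| ^ p ≤
      ∫ ξ in (0 : ℝ)..L, (ff J p ξ + J.card * (p₀ * (δ * L))) := by
    refine intervalIntegral.integral_mono_on hLpos.le (hcont.intervalIntegrable _ _)
      (((ff_cont J p hp).add continuous_const).intervalIntegrable _ _) fun ξ hξ => ?_
    refine aux_prod_le J (fun j => |Real.cos (φ j * ξ)| ^ p) (fun j => |Real.cos (ξ / 2 ^ j)| ^ p)
      _ (by positivity) (fun j => by positivity)
      (fun j => Real.rpow_le_one (abs_nonneg _) (Real.abs_cos_le_one _) (by linarith))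
      (fun j => by positivity)
      (fun j => Real.rpow_le_one (abs_nonneg _) (Real.abs_cos_le_one _) (by linarith)) ?_
    intro j hj
    refine (aux_rpow _ |Real.cos (ξ / 2 ^ j)| p (abs_nonneg _) (Real.abs_cos_le_one _)
      (abs_nonneg _) hp).trans ?_
    have h1 := aux_cos (φ j) ((2 : ℝ) ^ (-(j : ℤ))) ξ
    have h2 : (2 : ℝ) ^ (-(j : ℤ)) * ξ = ξ / 2 ^ j := by
      rw [zpow_neg, zpow_natCast]; field_simp
    rw [h2] at h1
    have h3 := hφ j hj
    have h4 : (2 : ℝ) ^ (-(j : ℤ)) ≤ 1 := zpow_le_one_of_nonpos₀ (by norm_num) (by simp)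
    have h5 : |φ j - (2 : ℝ) ^ (-(j : ℤ))| ≤ δ := by
      rw [abs_le]
      constructor <;> nlinarith [h3.1, h3.2]
    have h6 : |ξ| ≤ L := by rw [abs_of_nonneg hξ.1]; exact hξ.2
    have h7 := h1.trans (mul_le_mul h5 h6 (abs_nonneg _) hδpos.le)
    gcongr
  rw [intervalIntegral.integral_add ((ff_cont J p hp).intervalIntegrable _ _)
    (continuous_const.intervalIntegrable _ _), intervalIntegral.integral_const, smul_eq_mul,
    sub_zero] at hmono
  have hlast : L * (J.card * (p₀ * (δ * L))) ≤ ε := by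
    rw [← hδe, mul_comm]
    have : (J.card : ℝ) ≤ (N + 1 : ℕ) := by exact_mod_cast hcard
    gcongr
  have : ∫ ξ in (0 : ℝ)..L, ff J p ξ = I := rfl
  nlinarith
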